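/- Let w_x and w_y denote the lengths of the orthogonal projections of Ω onto the x-axis and onto the y-axis, respectively (the sidelengths of the rectangle circumscribed around Ω with sides parallel to the coordinate axes). Then for every u ∈ 𝒰_Ω one has ‖u_x‖₁ ≤ 2 (w_y / w_x) ‖u_y‖₁. -/

import Mathlib

open Set MeasureTheory
open scoped ENNReal

/-- Partial derivative of `u` in the `x` direction (junk value where `u` is not
differentiable). -/
noncomputable def ux (u : ℝ × ℝ → ℝ) (z : ℝ × ℝ) : ℝ := fderiv ℝ u z (1, 0)

/-- Partial derivative of `u` in the `y` direction. -/
noncomputable def uy (u : ℝ × ℝ → ℝ) (z : ℝ × ℝ) : ℝ := fderiv ℝ u z (0, 1)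

/-- Directional derivative of `u` in the direction `h`. -/
noncomputable def uh (h : ℝ × ℝ) (u : ℝ × ℝ → ℝ) (z : ℝ × ℝ) : ℝ := fderiv ℝ u z h

/-- The class `𝒰_Ω`: continuous concave functions on `Ω` vanishing on the boundary,
with uniformly bounded gradient over all interior points where it exists. -/
def MemU (Ω : Set (ℝ × ℝ)) (u : ℝ × ℝ → ℝ) : Prop :=
  ContinuousOn u Ω ∧ ConcaveOn ℝ Ω u ∧ (∀ z ∈ frontier Ω, u z = 0) ∧
    ∃ C : ℝ, ∀ z ∈ interior Ω, ∀ g : (ℝ × ℝ) →L[ℝ] ℝ, HasFDerivAt u g z → ‖g‖ ≤ C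

/-- The `L¹` norm of `f` over `Ω`. -/
noncomputable def L1N (Ω : Set (ℝ × ℝ)) (f : ℝ × ℝ → ℝ) : ℝ := ∫ z in Ω, |f z|

/-- The `L^p` norm of `f` over `Ω`, `p ∈ [1, ∞)`. -/
noncomputable def LpN (Ω : Set (ℝ × ℝ)) (p : ℝ) (f : ℝ × ℝ → ℝ) : ℝ :=
  (∫ z in Ω, |f z| ^ p) ^ (1 / p)

/-- The `L^∞` norm (essential supremum) of `f` over `Ω`. -/
noncomputable def LinfN (Ω : Set (ℝ × ℝ)) (f : ℝ × ℝ → ℝ) : ℝ≥0∞ :=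
  essSup (fun z => ENNReal.ofReal |f z|) (volume.restrict Ω)

/-- The width of `Ω` parallel to the (Euclidean unit) vector `h`: the distance between the
two lines of support of `Ω` parallel to `h`, i.e. the oscillation over `Ω` of the linear
functional given by the unit normal `(-h.2, h.1)` to `h`. -/
noncomputable def widthPar (Ω : Set (ℝ × ℝ)) (h : ℝ × ℝ) : ℝ :=
  sSup ((fun z : ℝ × ℝ => -h.2 * z.1 + h.1 * z.2) '' Ω) -
    sInf ((fun z : ℝ × ℝ => -h.2 * z.1 + h.1 * z.2) '' Ω)

/-!
By concavity, the restriction of `u` to a chord of `Ω` rises from `0` to its maximum and falls back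
to `0`, so its total variation is twice that maximum. Writing `g x` for the maximum of `u` on the
vertical chord over `x`, Fubini gives `‖u_y‖₁ = 2 ∫ g`, and symmetrically `‖u_x‖₁ = 2 ∫ h` for the
maxima `h y` over the horizontal chords. Let `M` be the maximum of `u` on `Ω`. Then `h ≤ M` yields
`‖u_x‖₁ ≤ 2 M w_y`. On the other hand `g` is nonnegative and concave on an interval of length `w_x`
and attains `M`, so its graph lies above a triangle of area `M w_x / 2`, whence `‖u_y‖₁ ≥ M w_x`.
-/

section OneVariable

variable {f : ℝ → ℝ} {p q m : ℝ}

theorem lintegral_enorm_deriv_eq_of_monotoneOn (hpq : p ≤ q) (hcont : ContinuousOn f (Icc p q))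
    (hmono : MonotoneOn f (Icc p q))
    (hdiff : ∀ t ∈ Ioo p q, DifferentiableWithinAt ℝ f (Ioi t) t) :
    ∫⁻ t in Icc p q, ‖deriv f t‖ₑ = ENNReal.ofReal (f q - f p) := by
  set f' : ℝ → ℝ := fun t => derivWithin f (Ioi t) t
  have hf' : ∀ t ∈ Ioo p q, HasDerivWithinAt f (f' t) (Ioi t) t := fun t ht =>
    (hdiff t ht).hasDerivWithinAt
  have hnonneg : ∀ t ∈ Ioo p q, 0 ≤ f' t := fun t ht => by
    have hIoo : derivWithin f (Ioo t q) t = f' t := by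
      rw [← Ioi_inter_Iio, derivWithin_inter (Iio_mem_nhds ht.2)]
    rw [← hIoo]
    exact (hmono.mono (Ioo_subset_Icc_self.trans (Icc_subset_Icc_left ht.1.le))).derivWithin_nonneg
  have hint : IntegrableOn f' (Ioc p q) :=
    intervalIntegral.integrableOn_deriv_right_of_nonneg hcont hf' hnonneg
  have hFTC : ∫ t in p..q, f' t = f q - f p :=
    intervalIntegral.integral_eq_sub_of_hasDeriv_right_of_le hpq hcont hf'
      ((intervalIntegrable_iff_integrableOn_Ioc_of_le hpq).2 hint)
  have hderiv : ∀ᵐ t, t ∈ Ioo p q → ‖deriv f t‖ₑ = ENNReal.ofReal (f' t) := by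
    filter_upwards [hmono.ae_differentiableWithinAt_of_mem] with t ht htI
    have hd := (ht (Ioo_subset_Icc_self htI)).differentiableAt (Icc_mem_nhds htI.1 htI.2)
    rw [← Real.enorm_of_nonneg (hnonneg t htI), ← hd.derivWithin (uniqueDiffWithinAt_Ioi t)]
  rw [← restrict_Ioo_eq_restrict_Icc, setLIntegral_congr_fun_ae measurableSet_Ioo hderiv,
    ← ofReal_integral_eq_lintegral_ofReal (hint.mono_set Ioo_subset_Ioc_self)
      ((ae_restrict_iff' measurableSet_Ioo).2 (.of_forall hnonneg)),
    ← integral_Ioc_eq_integral_Ioo, ← intervalIntegral.integral_of_le hpq, hFTC]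

theorem lintegral_enorm_deriv_eq_of_antitoneOn (hpq : p ≤ q) (hcont : ContinuousOn f (Icc p q))
    (hanti : AntitoneOn f (Icc p q))
    (hdiff : ∀ t ∈ Ioo p q, DifferentiableWithinAt ℝ f (Ioi t) t) :
    ∫⁻ t in Icc p q, ‖deriv f t‖ₑ = ENNReal.ofReal (f p - f q) := by
  have h := lintegral_enorm_deriv_eq_of_monotoneOn hpq hcont.neg hanti.neg
    fun t ht => (hdiff t ht).neg
  simpa [deriv.fun_neg', neg_add_eq_sub] using h

theorem lintegral_enorm_deriv_eq_of_concaveOn (hconc : ConcaveOn ℝ (Icc p q) f)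
    (hcont : ContinuousOn f (Icc p q)) (hm : m ∈ Icc p q) (hmax : IsMaxOn f (Icc p q) m) :
    ∫⁻ t in Icc p q, ‖deriv f t‖ₑ = ENNReal.ofReal (2 * f m - f p - f q) := by
  have hpq : p ≤ q := hm.1.trans hm.2
  have hsubl : Icc p m ⊆ Icc p q := Icc_subset_Icc_right hm.2
  have hsubr : Icc m q ⊆ Icc p q := Icc_subset_Icc_left hm.1
  have hmono : MonotoneOn f (Icc p m) := fun s hs t ht hst => by
    have h := hconc.min_le_of_mem_Icc (hsubl hs) hm ⟨hst, ht.2⟩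
    rwa [min_eq_left (hmax (hsubl hs))] at h
  have hanti : AntitoneOn f (Icc m q) := fun s hs t ht hst => by
    have h := hconc.min_le_of_mem_Icc hm (hsubr ht) ⟨hs.1, hst⟩
    rwa [min_eq_right (hmax (hsubr ht))] at h
  have hdiff : ∀ t ∈ Ioo p q, DifferentiableWithinAt ℝ f (Ioi t) t := fun t ht => by
    have h := hconc.neg.differentiableWithinAt_Ioi_of_mem_interior (x := t) (by rwa [interior_Icc])
    simpa using h.neg
  calc ∫⁻ t in Icc p q, ‖deriv f t‖ₑ
      = (∫⁻ t in Icc p m, ‖deriv f t‖ₑ) + ∫⁻ t in Icc m q, ‖deriv f t‖ₑ := by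
        rw [← Ico_union_Icc_eq_Icc hm.1 hm.2, lintegral_union measurableSet_Icc,
          restrict_Ico_eq_restrict_Icc]
        exact disjoint_left.2 fun t ht ht' => ht.2.not_ge ht'.1
    _ = ENNReal.ofReal (f m - f p) + ENNReal.ofReal (f m - f q) := by
        rw [lintegral_enorm_deriv_eq_of_monotoneOn hm.1 (hcont.mono hsubl) hmono
            fun t ht => hdiff t ⟨ht.1, ht.2.trans_le hm.2⟩,
          lintegral_enorm_deriv_eq_of_antitoneOn hm.2 (hcont.mono hsubr) hanti
            fun t ht => hdiff t ⟨hm.1.trans_lt ht.1, ht.2⟩]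
    _ = ENNReal.ofReal (2 * f m - f p - f q) := by
        rw [← ENNReal.ofReal_add (sub_nonneg.2 (hmax (left_mem_Icc.2 hpq)))
          (sub_nonneg.2 (hmax (right_mem_Icc.2 hpq)))]
        ring_nf

theorem div_mul_le_of_concaveOn_uIcc (hconc : ConcaveOn ℝ (uIcc p q) f) (hpq : p ≠ q)
    (hp : 0 ≤ f p) {x : ℝ} (hx : x ∈ uIcc p q) : (x - p) / (q - p) * f q ≤ f x := by
  obtain ⟨s, t, hs, ht, hst, rfl⟩ := (segment_eq_uIcc p q).symm ▸ hx
  have ht_eq : (s • p + t • q - p) / (q - p) = t := by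
    obtain rfl : s = 1 - t := by linarith
    rw [div_eq_iff (sub_ne_zero.2 hpq.symm)]
    simp only [smul_eq_mul]
    ring
  calc (s • p + t • q - p) / (q - p) * f q = t * f q := by rw [ht_eq]
    _ ≤ s * f p + t * f q := le_add_of_nonneg_left (mul_nonneg hs hp)
    _ ≤ f (s • p + t • q) := hconc.2 left_mem_uIcc right_mem_uIcc hs ht hst

theorem ofReal_mul_abs_sub_le_two_mul_lintegral_uIoc (hconc : ConcaveOn ℝ (uIcc p q) f)
    (hp : 0 ≤ f p) (hq : 0 ≤ f q) :
    ENNReal.ofReal (f q * |q - p|) ≤ 2 * ∫⁻ x in uIoc p q, ENNReal.ofReal (f x) := by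
  rcases eq_or_ne p q with rfl | hpq
  · simp
  set l : ℝ → ℝ := fun x => (x - p) / (q - p) * f q
  have harea : 2 * ∫ x in p..q, l x = f q * (q - p) := by
    have hne : q - p ≠ 0 := sub_ne_zero.2 hpq.symm
    simp only [l, intervalIntegral.integral_mul_const, intervalIntegral.integral_div,
      intervalIntegral.integral_comp_sub_right (fun x => x), sub_self, integral_id]
    field_simp
    ring
  have hl : ∀ x ∈ uIoc p q, ‖l x‖ₑ ≤ ENNReal.ofReal (f x) := fun x hx => by
    have hx' : x ∈ uIcc p q := uIoc_subset_uIcc hx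
    have hratio : 0 ≤ (x - p) / (q - p) := by
      rcases mem_uIcc.1 hx' with h | h
      · exact div_nonneg (sub_nonneg.2 h.1) (sub_nonneg.2 (h.1.trans h.2))
      · exact div_nonneg_of_nonpos (sub_nonpos.2 h.2) (sub_nonpos.2 (h.1.trans h.2))
    rw [Real.enorm_of_nonneg (mul_nonneg hratio hq)]
    exact ENNReal.ofReal_le_ofReal (div_mul_le_of_concaveOn_uIcc hconc hpq hp hx')
  calc ENNReal.ofReal (f q * |q - p|) = ‖f q * (q - p)‖ₑ := by
        rw [Real.enorm_eq_ofReal_abs, abs_mul, abs_of_nonneg hq]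
    _ = 2 * ‖∫ x in uIoc p q, l x‖ₑ := by
        rw [← harea, enorm_mul, enorm_eq_iff_norm_eq.2
            (intervalIntegral.norm_integral_eq_norm_integral_uIoc l),
          Real.enorm_of_nonneg zero_le_two, ENNReal.ofReal_ofNat]
    _ ≤ 2 * ∫⁻ x in uIoc p q, ‖l x‖ₑ := by
        gcongr
        exact enorm_integral_le_lintegral_enorm _
    _ ≤ 2 * ∫⁻ x in uIoc p q, ENNReal.ofReal (f x) := by
        gcongr 2 * ?_
        exact setLIntegral_mono' measurableSet_uIoc hl

theorem ofReal_mul_sub_le_two_mul_lintegral_Icc (hconc : ConcaveOn ℝ (Icc p q) f)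
    (hp : 0 ≤ f p) (hq : 0 ≤ f q) (hm : m ∈ Icc p q) :
    ENNReal.ofReal (f m * (q - p)) ≤ 2 * ∫⁻ x in Icc p q, ENNReal.ofReal (f x) := by
  have hpq : p ≤ q := hm.1.trans hm.2
  have hfm : 0 ≤ f m := (le_min hp hq).trans
    (hconc.min_le_of_mem_Icc (left_mem_Icc.2 hpq) (right_mem_Icc.2 hpq) hm)
  have hm' : m ∈ uIcc p q := uIcc_of_le hpq ▸ hm
  rw [← uIcc_of_le hpq] at hconc
  have hleft := ofReal_mul_abs_sub_le_two_mul_lintegral_uIoc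
    (hconc.subset (uIcc_subset_uIcc_left hm') (convex_uIcc p m)) hp hfm
  have hright := ofReal_mul_abs_sub_le_two_mul_lintegral_uIoc
    (hconc.subset (uIcc_comm m q ▸ uIcc_subset_uIcc_right hm') (convex_uIcc q m)) hq hfm
  rw [uIoc_of_le hm.1, abs_of_nonneg (sub_nonneg.2 hm.1)] at hleft
  rw [uIoc_comm, uIoc_of_le hm.2, abs_sub_comm, abs_of_nonneg (sub_nonneg.2 hm.2)] at hright
  calc ENNReal.ofReal (f m * (q - p))
      = ENNReal.ofReal (f m * (m - p)) + ENNReal.ofReal (f m * (q - m)) := by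
        rw [← ENNReal.ofReal_add (mul_nonneg hfm (sub_nonneg.2 hm.1))
          (mul_nonneg hfm (sub_nonneg.2 hm.2))]
        ring_nf
    _ ≤ 2 * (∫⁻ x in Ioc p m, ENNReal.ofReal (f x)) +
          2 * ∫⁻ x in Ioc m q, ENNReal.ofReal (f x) := add_le_add hleft hright
    _ = 2 * ∫⁻ x in Icc p q, ENNReal.ofReal (f x) := by
        rw [← mul_add, ← lintegral_union measurableSet_Ioc (Ioc_disjoint_Ioc_of_le le_rfl),
          Ioc_union_Ioc_eq_Ioc hm.1 hm.2, restrict_Ioc_eq_restrict_Icc]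

end OneVariable

section AlmostEverywhere

variable {E : Type*} [NormedAddCommGroup E] [NormedSpace ℝ E] [FiniteDimensional ℝ E]
  [MeasurableSpace E] [BorelSpace E] (μ : Measure E) [μ.IsAddHaarMeasure] {s : Set E} {u : E → ℝ}

theorem ae_differentiableAt_of_locallyLipschitzOn (hs : IsOpen s) (hu : LocallyLipschitzOn s u) :
    ∀ᵐ z ∂μ, z ∈ s → DifferentiableAt ℝ u z := by
  rw [ae_iff]
  refine measure_null_of_locally_null _ fun z hz => ?_
  obtain ⟨hzs, -⟩ := Classical.not_imp.1 hz
  obtain ⟨K, t, ht, hK⟩ := hu hzs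
  rw [hs.nhdsWithin_eq hzs] at ht
  refine ⟨_, inter_mem_nhdsWithin _ (interior_mem_nhds.2 ht), measure_mono_null ?_
    (ae_iff.1 ((hK.mono interior_subset).ae_differentiableWithinAt_of_mem (μ := μ)))⟩
  rintro w ⟨hw, hwt⟩ hdiff
  exact hw fun _ => (hdiff hwt).differentiableAt (isOpen_interior.mem_nhds hwt)

theorem ae_differentiableAt_of_concaveOn (hu : ConcaveOn ℝ s u) :
    ∀ᵐ z ∂μ, z ∈ s → DifferentiableAt ℝ u z := by
  filter_upwards [ae_differentiableAt_of_locallyLipschitzOn μ isOpen_interior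
    hu.locallyLipschitzOn_interior, measure_eq_zero_iff_ae_notMem.1 (hu.1.addHaar_frontier μ)]
    with z hz hzf hzs
  exact hz (by_contra fun h => hzf ⟨subset_closure hzs, h⟩)

theorem setLIntegral_prod_eq_lintegral_section {X Y : Type*} [MeasurableSpace X]
    [MeasurableSpace Y] {μ : Measure X} {ν : Measure Y} [SFinite ν] {s : Set (X × Y)}
    (hs : MeasurableSet s) {F : X × Y → ℝ≥0∞} (hF : Measurable F) :
    ∫⁻ z in s, F z ∂μ.prod ν = ∫⁻ x, ∫⁻ y in Prod.mk x ⁻¹' s, F (x, y) ∂ν ∂μ := by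
  rw [← lintegral_indicator hs, lintegral_prod _ (hF.indicator hs).aemeasurable]
  exact lintegral_congr fun x => lintegral_indicator (measurable_prodMk_left hs) _

end AlmostEverywhere

theorem isClosedEmbedding_prodMk {X Y : Type*} [TopologicalSpace X] [T1Space X]
    [TopologicalSpace Y] (x : X) : Topology.IsClosedEmbedding (Prod.mk x : Y → X × Y) :=
  .of_continuous_injective_isClosedMap (by fun_prop) (Prod.mk_right_injective x)
    (isClosedMap_prodMk_left x)

section FiberSup

variable {X Y : Type*} {Ω : Set (X × Y)} {u : X × Y → ℝ} {x : X} {y : Y}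

/-- The maximum of `u` over the fiber of `Ω` above `x`, as a function of `x`; it is `0` when the
fiber is empty. -/
noncomputable def fiberSup (Ω : Set (X × Y)) (u : X × Y → ℝ) (x : X) : ℝ :=
  sSup ((fun y => u (x, y)) '' (Prod.mk x ⁻¹' Ω))

theorem fiberSup_le {M : ℝ} (hM : 0 ≤ M) (h : ∀ z ∈ Ω, u z ≤ M) (x : X) : fiberSup Ω u x ≤ M :=
  Real.sSup_le (forall_mem_image.2 fun _ hy => h _ hy) hM

theorem fiberSup_nonneg (h : ∀ z ∈ Ω, 0 ≤ u z) (x : X) : 0 ≤ fiberSup Ω u x :=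
  Real.sSup_nonneg (forall_mem_image.2 fun _ hy => h _ hy)

theorem fiberSup_eq_zero_of_notMem (hx : x ∉ Prod.fst '' Ω) : fiberSup Ω u x = 0 := by
  have hempty : Prod.mk x ⁻¹' Ω = ∅ := eq_empty_of_forall_notMem fun y hy => hx ⟨(x, y), hy, rfl⟩
  rw [fiberSup, hempty, image_empty, Real.sSup_empty]

theorem le_fiberSup [TopologicalSpace X] [TopologicalSpace Y] (hΩ : IsCompact Ω)
    (hu : ContinuousOn u Ω) (hy : (x, y) ∈ Ω) : u (x, y) ≤ fiberSup Ω u x := by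
  refine le_csSup ((hΩ.bddAbove_image hu).mono ?_) (mem_image_of_mem _ hy)
  exact image_subset_iff.2 fun y hy => mem_image_of_mem u hy

theorem exists_mem_eq_fiberSup [TopologicalSpace X] [T1Space X] [TopologicalSpace Y]
    (hΩ : IsCompact Ω) (hu : ContinuousOn u Ω) (hx : x ∈ Prod.fst '' Ω) :
    ∃ y, (x, y) ∈ Ω ∧ u (x, y) = fiberSup Ω u x := by
  obtain ⟨⟨x, y⟩, hxy, rfl⟩ := hx
  have hemb := isClosedEmbedding_prodMk (Y := Y) x
  obtain ⟨y', hy', h⟩ := (hemb.isCompact_preimage hΩ).exists_sSup_image_eq ⟨y, hxy⟩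
    (hu.comp hemb.continuous.continuousOn (mapsTo_preimage _ _))
  exact ⟨y', hy', h.symm⟩

theorem concaveOn_fiberSup [AddCommGroup X] [Module ℝ X] [TopologicalSpace X] [T1Space X]
    [AddCommGroup Y] [Module ℝ Y] [TopologicalSpace Y]
    (hΩ : IsCompact Ω) (hcont : ContinuousOn u Ω) (hconc : ConcaveOn ℝ Ω u) :
    ConcaveOn ℝ (Prod.fst '' Ω) (fiberSup Ω u) := by
  refine ⟨hconc.1.linear_image (LinearMap.fst ℝ X Y), fun x₁ h₁ x₂ h₂ s t hs ht hst => ?_⟩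
  obtain ⟨y₁, hy₁, hu₁⟩ := exists_mem_eq_fiberSup hΩ hcont h₁
  obtain ⟨y₂, hy₂, hu₂⟩ := exists_mem_eq_fiberSup hΩ hcont h₂
  rw [← hu₁, ← hu₂]
  exact (hconc.2 hy₁ hy₂ hs ht hst).trans
    (le_fiberSup hΩ hcont (hconc.1 hy₁ hy₂ hs ht hst))

end FiberSup

/-- Concave caps over a compact set: the class `𝒰_Ω` on an arbitrary topological vector space,
without the bound on the gradient. The convexity of `Ω` is part of `ConcaveOn`. -/
structure IsConcaveCap {E : Type*} [AddCommGroup E] [Module ℝ E] [TopologicalSpace E]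
    (Ω : Set E) (u : E → ℝ) : Prop where
  isCompact : IsCompact Ω
  continuousOn : ContinuousOn u Ω
  concaveOn : ConcaveOn ℝ Ω u
  eq_zero_of_mem_frontier : ∀ z ∈ frontier Ω, u z = 0

namespace IsConcaveCap

section Restriction

variable {E F : Type*} [AddCommGroup E] [Module ℝ E] [TopologicalSpace E]
  [AddCommGroup F] [Module ℝ F] [TopologicalSpace F]

theorem comp_affineMap {Ω : Set E} {u : E → ℝ} (hu : IsConcaveCap Ω u) {A : F →ᵃ[ℝ] E}
    (hA : Topology.IsClosedEmbedding A) : IsConcaveCap (A ⁻¹' Ω) (u ∘ A) where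
  isCompact := hA.isCompact_preimage hu.isCompact
  continuousOn := hu.continuousOn.comp hA.continuous.continuousOn (mapsTo_preimage _ _)
  concaveOn := hu.concaveOn.comp_affineMap A
  eq_zero_of_mem_frontier _ hz :=
    hu.eq_zero_of_mem_frontier _ (hA.continuous.frontier_preimage_subset Ω hz)

theorem comp_prodMk [T1Space E] {Ω : Set (E × F)} {u : E × F → ℝ} (hu : IsConcaveCap Ω u) (x : E) :
    IsConcaveCap (Prod.mk x ⁻¹' Ω) fun y => u (x, y) :=
  hu.comp_affineMap (A := (AffineMap.const ℝ F x).prod (AffineMap.id ℝ F))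
    (isClosedEmbedding_prodMk x)

theorem comp_swap {Ω : Set (E × F)} {u : E × F → ℝ} (hu : IsConcaveCap Ω u) :
    IsConcaveCap (Prod.swap ⁻¹' Ω) (u ∘ Prod.swap) :=
  hu.comp_affineMap (A := (LinearEquiv.prodComm ℝ F E).toLinearMap.toAffineMap)
    (Homeomorph.prodComm F E).isClosedEmbedding

end Restriction

theorem exists_eq_Icc {S : Set ℝ} {f : ℝ → ℝ} (hf : IsConcaveCap S f) (hS : S.Nonempty) :
    ∃ p q, p ≤ q ∧ S = Icc p q ∧ f p = 0 ∧ f q = 0 := by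
  have hIcc := eq_Icc_of_connected_compact ⟨hS, hf.concaveOn.1.isPreconnected⟩ hf.isCompact
  have hpq : sInf S ≤ sSup S := nonempty_Icc.1 (hIcc ▸ hS)
  have h0 : ∀ t ∈ ({sInf S, sSup S} : Set ℝ), f t = 0 := fun t ht =>
    hf.eq_zero_of_mem_frontier t (by rwa [hIcc, frontier_Icc hpq])
  exact ⟨_, _, hpq, hIcc, h0 _ (.inl rfl), h0 _ (.inr rfl)⟩

theorem nonneg_of_real {S : Set ℝ} {f : ℝ → ℝ} (hf : IsConcaveCap S f) {t : ℝ} (ht : t ∈ S) :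
    0 ≤ f t := by
  obtain ⟨p, q, hpq, rfl, hp, hq⟩ := hf.exists_eq_Icc ⟨t, ht⟩
  simpa [hp, hq] using
    hf.concaveOn.min_le_of_mem_Icc (left_mem_Icc.2 hpq) (right_mem_Icc.2 hpq) ht

theorem lintegral_enorm_deriv {S : Set ℝ} {f : ℝ → ℝ} (hf : IsConcaveCap S f) :
    ∫⁻ t in S, ‖deriv f t‖ₑ = 2 * ENNReal.ofReal (sSup (f '' S)) := by
  rcases S.eq_empty_or_nonempty with rfl | hS
  · simp
  obtain ⟨m, hm, hsup, hmax⟩ := hf.isCompact.exists_sSup_image_eq_and_ge hS hf.continuousOn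
  obtain ⟨p, q, -, rfl, hp, hq⟩ := hf.exists_eq_Icc hS
  rw [lintegral_enorm_deriv_eq_of_concaveOn hf.concaveOn hf.continuousOn hm hmax, hp, hq, hsup,
    sub_zero, sub_zero, ENNReal.ofReal_mul zero_le_two, ENNReal.ofReal_ofNat]

theorem nonneg {E : Type*} [AddCommGroup E] [Module ℝ E] [TopologicalSpace E]
    [IsTopologicalAddGroup E] [ContinuousSMul ℝ E] [T2Space E] [Nontrivial E] {Ω : Set E}
    {u : E → ℝ} (hu : IsConcaveCap Ω u) {z : E} (hz : z ∈ Ω) : 0 ≤ u z := by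
  obtain ⟨v, hv⟩ := exists_ne (0 : E)
  have hline : Topology.IsClosedEmbedding (AffineMap.lineMap z (z + v) : ℝ →ᵃ[ℝ] E) := by
    convert (Homeomorph.addRight z).isClosedEmbedding.comp
      (isClosedEmbedding_smul_left (𝕜 := ℝ) hv) using 1
    ext r
    simp [AffineMap.lineMap_apply]
  have h := (hu.comp_affineMap hline).nonneg_of_real (t := 0) (by simpa using hz)
  simpa using h

end IsConcaveCap

theorem uy_eq_deriv {u : ℝ × ℝ → ℝ} {x y : ℝ} (hu : DifferentiableAt ℝ u (x, y)) :
    uy u (x, y) = deriv (fun s => u (x, s)) y :=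
  (hu.hasFDerivAt.comp_hasDerivAt y
    ((hasDerivAt_const y x).prodMk (hasDerivAt_id y))).deriv.symm

theorem ux_eq_uy_comp_swap (u : ℝ × ℝ → ℝ) (z : ℝ × ℝ) :
    ux u z = uy (u ∘ Prod.swap) z.swap := by
  have h := (ContinuousLinearEquiv.prodComm ℝ ℝ ℝ).comp_right_fderiv (f := u) (x := z.swap)
  exact (DFunLike.congr_fun h (0, 1)).symm

theorem measurable_ux (u : ℝ × ℝ → ℝ) : Measurable (ux u) :=
  measurable_fderiv_apply_const ℝ u (1, 0)

theorem measurable_uy (u : ℝ × ℝ → ℝ) : Measurable (uy u) :=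
  measurable_fderiv_apply_const ℝ u (0, 1)

theorem setLIntegral_enorm_ux_eq_swap (Ω : Set (ℝ × ℝ)) (u : ℝ × ℝ → ℝ) :
    ∫⁻ z in Ω, ‖ux u z‖ₑ = ∫⁻ z in Prod.swap ⁻¹' Ω, ‖uy (u ∘ Prod.swap) z‖ₑ := by
  simp only [ux_eq_uy_comp_swap u]
  exact Measure.measurePreserving_swap.setLIntegral_comp_preimage_emb
    MeasurableEquiv.prodComm.measurableEmbedding (fun z => ‖uy (u ∘ Prod.swap) z‖ₑ)
    (Prod.swap ⁻¹' Ω)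

namespace IsConcaveCap

variable {Ω : Set (ℝ × ℝ)} {u : ℝ × ℝ → ℝ} {a b c d M : ℝ}

theorem lintegral_enorm_uy (hu : IsConcaveCap Ω u) :
    ∫⁻ z in Ω, ‖uy u z‖ₑ = 2 * ∫⁻ x, ENNReal.ofReal (fiberSup Ω u x) := by
  have hΩ : MeasurableSet Ω := hu.isCompact.measurableSet
  have hdiff : ∀ᵐ x : ℝ, ∀ᵐ y : ℝ, (x, y) ∈ Ω → DifferentiableAt ℝ u (x, y) :=
    Measure.ae_ae_of_ae_prod (ae_differentiableAt_of_concaveOn volume hu.concaveOn)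
  rw [Measure.volume_eq_prod,
    setLIntegral_prod_eq_lintegral_section hΩ (measurable_uy u).enorm,
    ← lintegral_const_mul' _ _ ENNReal.ofNat_ne_top]
  refine lintegral_congr_ae (hdiff.mono fun x hx => ?_)
  calc ∫⁻ y in Prod.mk x ⁻¹' Ω, ‖uy u (x, y)‖ₑ
      = ∫⁻ y in Prod.mk x ⁻¹' Ω, ‖deriv (fun y => u (x, y)) y‖ₑ :=
        setLIntegral_congr_fun_ae (measurable_prodMk_left hΩ)
          (hx.mono fun y hy hyΩ => by rw [uy_eq_deriv (hy hyΩ)])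
    _ = 2 * ENNReal.ofReal (fiberSup Ω u x) := (hu.comp_prodMk x).lintegral_enorm_deriv

theorem lintegral_enorm_uy_le (hu : IsConcaveCap Ω u) (hproj : Prod.fst '' Ω ⊆ Icc a b)
    (hM : 0 ≤ M) (huM : ∀ z ∈ Ω, u z ≤ M) :
    ∫⁻ z in Ω, ‖uy u z‖ₑ ≤ ENNReal.ofReal (2 * M * (b - a)) := by
  have hsupp : ∀ x, ENNReal.ofReal (fiberSup Ω u x) ≤
      (Icc a b).indicator (fun _ => ENNReal.ofReal M) x := fun x => by
    by_cases hx : x ∈ Icc a b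
    · rw [indicator_of_mem hx]
      exact ENNReal.ofReal_le_ofReal (fiberSup_le hM huM x)
    · simp [fiberSup_eq_zero_of_notMem (u := u) (fun h => hx (hproj h))]
  calc ∫⁻ z in Ω, ‖uy u z‖ₑ = 2 * ∫⁻ x, ENNReal.ofReal (fiberSup Ω u x) := hu.lintegral_enorm_uy
    _ ≤ 2 * ∫⁻ x, (Icc a b).indicator (fun _ => ENNReal.ofReal M) x := by
        gcongr with x
        exact hsupp x
    _ = ENNReal.ofReal (2 * M * (b - a)) := by
        rw [lintegral_indicator_const measurableSet_Icc, Real.volume_Icc,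
          ENNReal.ofReal_mul (mul_nonneg zero_le_two hM), ENNReal.ofReal_mul zero_le_two,
          ENNReal.ofReal_ofNat, mul_assoc]

theorem lintegral_enorm_ux_le (hu : IsConcaveCap Ω u) (hproj : Prod.snd '' Ω ⊆ Icc c d)
    (hM : 0 ≤ M) (huM : ∀ z ∈ Ω, u z ≤ M) :
    ∫⁻ z in Ω, ‖ux u z‖ₑ ≤ ENNReal.ofReal (2 * M * (d - c)) := by
  rw [setLIntegral_enorm_ux_eq_swap]
  refine hu.comp_swap.lintegral_enorm_uy_le ?_ hM fun z hz => huM _ hz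
  exact image_subset_iff.2 fun z hz => hproj (mem_image_of_mem Prod.snd (mem_preimage.1 hz))

theorem le_lintegral_enorm_uy (hu : IsConcaveCap Ω u) (hproj : Prod.fst '' Ω = Icc a b)
    {z : ℝ × ℝ} (hz : z ∈ Ω) : ENNReal.ofReal (u z * (b - a)) ≤ ∫⁻ w in Ω, ‖uy u w‖ₑ := by
  have hconc : ConcaveOn ℝ (Icc a b) (fiberSup Ω u) :=
    hproj ▸ concaveOn_fiberSup hu.isCompact hu.continuousOn hu.concaveOn
  have hnonneg : ∀ w ∈ Ω, 0 ≤ u w := fun w hw => hu.nonneg hw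
  have hz1 : z.1 ∈ Icc a b := hproj ▸ mem_image_of_mem Prod.fst hz
  have hab : 0 ≤ b - a := sub_nonneg.2 (hz1.1.trans hz1.2)
  calc ENNReal.ofReal (u z * (b - a))
      ≤ ENNReal.ofReal (fiberSup Ω u z.1 * (b - a)) :=
        ENNReal.ofReal_le_ofReal
          (mul_le_mul_of_nonneg_right (le_fiberSup hu.isCompact hu.continuousOn hz) hab)
    _ ≤ 2 * ∫⁻ x in Icc a b, ENNReal.ofReal (fiberSup Ω u x) :=
        ofReal_mul_sub_le_two_mul_lintegral_Icc hconc (fiberSup_nonneg hnonneg a)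
          (fiberSup_nonneg hnonneg b) hz1
    _ ≤ 2 * ∫⁻ x, ENNReal.ofReal (fiberSup Ω u x) := by
        gcongr
        exact Measure.restrict_le_self
    _ = ∫⁻ w in Ω, ‖uy u w‖ₑ := hu.lintegral_enorm_uy.symm

end IsConcaveCap

theorem L1N_eq_toReal_lintegral (Ω : Set (ℝ × ℝ)) {f : ℝ × ℝ → ℝ} (hf : Measurable f) :
    L1N Ω f = (∫⁻ z in Ω, ‖f z‖ₑ).toReal :=
  integral_norm_eq_lintegral_enorm hf.aestronglyMeasurable

theorem lt_of_image_fst_eq_Icc {Y : Type*} [TopologicalSpace Y] {Ω : Set (ℝ × Y)} {a b : ℝ}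
    (hΩ : (interior Ω).Nonempty) (hproj : Prod.fst '' Ω = Icc a b) : a < b := by
  have h : Prod.fst '' interior Ω ⊆ Ioo a b := by
    rw [← interior_Icc, ← hproj]
    exact isOpenMap_fst.image_interior_subset Ω
  exact nonempty_Ioo.1 ((hΩ.image _).mono h)

theorem stmt_4_general {Ω : Set (ℝ × ℝ)} (hΩc : IsCompact Ω) (hΩint : (interior Ω).Nonempty)
    {a b c d : ℝ} (hprojx : Prod.fst '' Ω = Icc a b) (hprojy : Prod.snd '' Ω = Icc c d)
    {u : ℝ × ℝ → ℝ} (hcont : ContinuousOn u Ω) (hconc : ConcaveOn ℝ Ω u)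
    (hzero : ∀ z ∈ frontier Ω, u z = 0) :
    L1N Ω (ux u) ≤ 2 * ((d - c) / (b - a)) * L1N Ω (uy u) := by
  have hu : IsConcaveCap Ω u := ⟨hΩc, hcont, hconc, hzero⟩
  have hne : Ω.Nonempty := hΩint.mono interior_subset
  obtain ⟨z₀, hz₀, hmax⟩ := hΩc.exists_isMaxOn hne hcont
  have hM : 0 ≤ u z₀ := hu.nonneg hz₀
  have hab : 0 < b - a := sub_pos.2 (lt_of_image_fst_eq_Icc hΩint hprojx)
  have hcd : 0 ≤ d - c := sub_nonneg.2 (nonempty_Icc.1 (hprojy ▸ hne.image _))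
  have hux : L1N Ω (ux u) ≤ 2 * u z₀ * (d - c) := by
    rw [L1N_eq_toReal_lintegral Ω (measurable_ux u)]
    exact ENNReal.toReal_le_of_le_ofReal (by positivity)
      (hu.lintegral_enorm_ux_le hprojy.subset hM hmax)
  have huy : u z₀ * (b - a) ≤ L1N Ω (uy u) := by
    have hfin : ∫⁻ z in Ω, ‖uy u z‖ₑ ≠ ∞ :=
      ne_top_of_le_ne_top ENNReal.ofReal_ne_top (hu.lintegral_enorm_uy_le hprojx.subset hM hmax)
    rw [L1N_eq_toReal_lintegral Ω (measurable_uy u)]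
    exact (ENNReal.ofReal_le_iff_le_toReal hfin).1 (hu.le_lintegral_enorm_uy hprojx hz₀)
  calc L1N Ω (ux u) ≤ 2 * u z₀ * (d - c) := hux
    _ = 2 * ((d - c) / (b - a)) * (u z₀ * (b - a)) := by field_simp
    _ ≤ 2 * ((d - c) / (b - a)) * L1N Ω (uy u) := by gcongr

/-- Theorem 1: `‖u_x‖₁ ≤ 2 (w_y / w_x) ‖u_y‖₁`, where `w_x = b - a` and
`w_y = d - c` are the lengths of the projections of `Ω` to the two coordinate axes. -/
theorem stmt_4 (Ω : Set (ℝ × ℝ)) (hΩc : IsCompact Ω) (hΩconv : Convex ℝ Ω)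
    (hΩint : (interior Ω).Nonempty)
    (a b c d : ℝ)
    (hprojx : (fun z : ℝ × ℝ => z.1) '' Ω = Icc a b)
    (hprojy : (fun z : ℝ × ℝ => z.2) '' Ω = Icc c d)
    (u : ℝ × ℝ → ℝ) (hu : MemU Ω u) :
    L1N Ω (ux u) ≤ 2 * ((d - c) / (b - a)) * L1N Ω (uy u) :=
  stmt_4_general hΩc hΩint hprojx hprojy hu.1 hu.2.1 hu.2.2.1
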